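/- Assume A is standardized and let x ∈ range(Aᵀ). Then (1/m) Σ_{i=1}^m ‖x − (A^{(i)}x − b_i)·(A^{(i)})ᵀ − x⋆‖₂² ≤ (1 − λ_min⁺(AᵀA)/m) · ‖x − x⋆‖₂². -/

import Mathlib

open Matrix Finset

/-- The largest eigenvalue of a square real matrix (as the supremum of its
eigenvalue set). -/
noncomputable def maxEig {k : ℕ} (M : Matrix (Fin k) (Fin k) ℝ) : ℝ :=
  sSup {μ : ℝ | Module.End.HasEigenvalue (Matrix.mulVecLin M) μ}

/-- The smallest positive eigenvalue of a square real matrix. -/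
noncomputable def minPosEig {k : ℕ} (M : Matrix (Fin k) (Fin k) ℝ) : ℝ :=
  sInf {μ : ℝ | Module.End.HasEigenvalue (Matrix.mulVecLin M) μ ∧ 0 < μ}

/-- The restriction of `A` to the rows indexed by `I`. -/
def rowSub {m n : ℕ} (A : Matrix (Fin m) (Fin n) ℝ) (I : Finset (Fin m)) :
    Matrix {i : Fin m // i ∈ I} (Fin n) ℝ :=
  fun i j => A i.1 j

/-- Squared Euclidean norm. -/
noncomputable def sqNorm {k : ℕ} (v : Fin k → ℝ) : ℝ := ∑ j, (v j) ^ 2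

/-- `xp` is the exact block Kaczmarz update of `x` with respect to the row
index set `I`: it satisfies the equations indexed by `I` and minimizes the
distance to `x` among all such points (hence is the orthogonal projection of
`x` onto the affine solution set, which is the unique such minimizer). -/
def IsKaczmarzUpdate {m n : ℕ} (A : Matrix (Fin m) (Fin n) ℝ)
    (b : Fin m → ℝ) (I : Finset (Fin m)) (x xp : Fin n → ℝ) : Prop :=
  (∀ i ∈ I, A i ⬝ᵥ xp = b i) ∧
  ∀ y : Fin n → ℝ, (∀ i ∈ I, A i ⬝ᵥ y = b i) → sqNorm (xp - x) ≤ sqNorm (y - x)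

/-- `I` is a greedy `δ`-subset of `τ` for `x`: `I ⊆ τ`, `|I| = δ`, and the
residual entries on `I` dominate (in absolute value) those on `τ \ I`. -/
def IsGreedySubset {m n : ℕ} (A : Matrix (Fin m) (Fin n) ℝ) (b : Fin m → ℝ)
    (x : Fin n → ℝ) (δ : ℕ) (τ I : Finset (Fin m)) : Prop :=
  I ⊆ τ ∧ I.card = δ ∧
    ∀ i ∈ I, ∀ j ∈ τ \ I, |A j ⬝ᵥ x - b j| ≤ |A i ⬝ᵥ x - b i|

lemma minPosEig_le_of_hasEigenvalue {k : ℕ} {M : Matrix (Fin k) (Fin k) ℝ} {μ : ℝ}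
    (h : Module.End.HasEigenvalue (Matrix.mulVecLin M) μ) (hμ : 0 < μ) : minPosEig M ≤ μ :=
  csInf_le ⟨0, fun _ hν => hν.2.le⟩ ⟨h, hμ⟩

lemma sqNorm_eq_dotProduct {k : ℕ} (v : Fin k → ℝ) : sqNorm v = v ⬝ᵥ v := by
  simp [sqNorm, dotProduct, sq]

/-- Parseval's identity for the eigenvector basis of a symmetric matrix, in terms of `⬝ᵥ`. -/
lemma sum_eigenvectorBasis_dotProduct_mul {k : ℕ} {M : Matrix (Fin k) (Fin k) ℝ}
    (hM : M.IsHermitian) (v w : Fin k → ℝ) :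
    ∑ i, ((hM.eigenvectorBasis i).ofLp ⬝ᵥ v) * ((hM.eigenvectorBasis i).ofLp ⬝ᵥ w) = v ⬝ᵥ w := by
  have h := hM.eigenvectorBasis.sum_inner_mul_inner (WithLp.toLp 2 v) (WithLp.toLp 2 w)
  simpa [EuclideanSpace.inner_eq_star_dotProduct, dotProduct_comm] using h

/-- On the row space of `A`, the quadratic form of `Aᵀ * A` is bounded below by its smallest
positive eigenvalue. -/
lemma minPosEig_mul_sqNorm_le {m n : ℕ} (A : Matrix (Fin m) (Fin n) ℝ) (w : Fin m → ℝ) :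
    minPosEig (Aᵀ * A) * sqNorm (Aᵀ *ᵥ w) ≤ sqNorm (A *ᵥ (Aᵀ *ᵥ w)) := by
  have hM : (Aᵀ * A).IsHermitian := by
    simpa using Matrix.isHermitian_conjTranspose_mul_self A
  set e := Aᵀ *ᵥ w with he
  set u : Fin n → Fin n → ℝ := fun i => (hM.eigenvectorBasis i).ofLp with hu
  have hMu (i : Fin n) : (Aᵀ * A) *ᵥ u i = hM.eigenvalues i • u i := hM.mulVec_eigenvectorBasis i
  have hself (v z : Fin n → ℝ) : v ⬝ᵥ ((Aᵀ * A) *ᵥ z) = (A *ᵥ v) ⬝ᵥ (A *ᵥ z) := by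
    rw [← mulVec_mulVec, dotProduct_mulVec, vecMul_transpose]
  have hquad : sqNorm (A *ᵥ e) = ∑ i, hM.eigenvalues i * (u i ⬝ᵥ e) ^ 2 := by
    rw [sqNorm_eq_dotProduct, ← hself, ← sum_eigenvectorBasis_dotProduct_mul hM]
    refine Finset.sum_congr rfl fun i _ => ?_
    change (u i ⬝ᵥ e) * (u i ⬝ᵥ _) = _
    rw [hself, dotProduct_comm (A *ᵥ u i), ← hself, hMu, dotProduct_smul, dotProduct_comm e,
      smul_eq_mul]
    ring
  have hnorm : sqNorm e = ∑ i, (u i ⬝ᵥ e) ^ 2 := by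
    rw [sqNorm_eq_dotProduct, ← sum_eigenvectorBasis_dotProduct_mul hM]
    exact Finset.sum_congr rfl fun i _ => (sq _).symm
  rw [hquad, hnorm, Finset.mul_sum]
  refine Finset.sum_le_sum fun i _ => ?_
  have hnonneg : 0 ≤ hM.eigenvalues i := by
    have hpsd : (Aᵀ * A).PosSemidef := by
      simpa using Matrix.posSemidef_conjTranspose_mul_self A
    exact hpsd.eigenvalues_nonneg i
  rcases hnonneg.eq_or_lt with h0 | hpos
  · have hAu : A *ᵥ u i = 0 := by
      rw [← dotProduct_self_eq_zero, ← hself, hMu, ← h0, zero_smul, dotProduct_zero]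
    have hzero : u i ⬝ᵥ e = 0 := by
      rw [he, dotProduct_mulVec, vecMul_transpose, hAu, zero_dotProduct]
    simp [hzero]
  · refine mul_le_mul_of_nonneg_right (minPosEig_le_of_hasEigenvalue ?_ hpos) (sq_nonneg _)
    refine Module.End.hasEigenvalue_of_hasEigenvector (x := u i)
      ⟨Module.End.mem_eigenspace_iff.mpr (hMu i), fun h => ?_⟩
    exact hM.eigenvectorBasis.orthonormal.ne_zero i (WithLp.ofLp_injective 2 h)

/-- Subtracting the component along a unit vector reduces the squared norm by the square of that
component. -/
lemma sqNorm_sub_dotProduct_smul {k : ℕ} (a v : Fin k → ℝ) (ha : sqNorm a = 1) :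
    sqNorm (v - (a ⬝ᵥ v) • a) = sqNorm v - (a ⬝ᵥ v) ^ 2 := by
  rw [sqNorm_eq_dotProduct] at ha
  simp only [sqNorm_eq_dotProduct, sub_dotProduct, dotProduct_sub, smul_dotProduct,
    dotProduct_smul, smul_eq_mul, ha, dotProduct_comm v a]
  ring

theorem rk_one_step_average {m n : ℕ}
    (A : Matrix (Fin m) (Fin n) ℝ) (hA : A ≠ 0)
    (hstd : ∀ i : Fin m, ∑ j, (A i j) ^ 2 = 1)
    (b : Fin m → ℝ)
    (xstar : Fin n → ℝ) (hconsistent : A.mulVec xstar = b)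
    (hxstar : xstar ∈ Set.range Aᵀ.mulVec)
    (x : Fin n → ℝ) (hx : x ∈ Set.range Aᵀ.mulVec) :
    (1 / (m : ℝ)) *
        ∑ i : Fin m,
          sqNorm ((fun j => x j - (A i ⬝ᵥ x - b i) * A i j) - xstar) ≤
      (1 - minPosEig (Aᵀ * A) / (m : ℝ)) * sqNorm (x - xstar) := by
  obtain ⟨w, rfl⟩ := hx
  obtain ⟨z, rfl⟩ := hxstar
  set e := Aᵀ *ᵥ w - Aᵀ *ᵥ z with he
  have hm : (m : ℝ) ≠ 0 := by
    rintro h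
    obtain rfl : m = 0 := by exact_mod_cast h
    exact hA (Subsingleton.elim _ _)
  have hstep (i : Fin m) :
      sqNorm ((fun j => (Aᵀ *ᵥ w) j - (A i ⬝ᵥ (Aᵀ *ᵥ w) - b i) * A i j) - Aᵀ *ᵥ z) =
        sqNorm e - (A *ᵥ e) i ^ 2 := by
    have hres : A i ⬝ᵥ (Aᵀ *ᵥ w) - b i = A i ⬝ᵥ e := by
      rw [he, dotProduct_sub, ← hconsistent]
      rfl
    rw [hres]
    refine Eq.trans (congrArg sqNorm ?_) (sqNorm_sub_dotProduct_smul (A i) e (hstd i))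
    ext j
    simp only [he, Pi.sub_apply, Pi.smul_apply, smul_eq_mul]
    ring
  have hbound : minPosEig (Aᵀ * A) * sqNorm e ≤ sqNorm (A *ᵥ e) := by
    rw [he, ← mulVec_sub]
    exact minPosEig_mul_sqNorm_le A (w - z)
  have hsum : ∑ i, (sqNorm e - (A *ᵥ e) i ^ 2) = m * sqNorm e - sqNorm (A *ᵥ e) := by
    simp [Finset.sum_sub_distrib, sqNorm]
  simp_rw [hstep]
  rw [hsum]
  calc 1 / (m : ℝ) * (m * sqNorm e - sqNorm (A *ᵥ e))
      ≤ 1 / (m : ℝ) * (m * sqNorm e - minPosEig (Aᵀ * A) * sqNorm e) := by gcongr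
    _ = (1 - minPosEig (Aᵀ * A) / m) * sqNorm e := by field_simp
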